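/- For any bivector B in ℝ_{p,q,r}, the product Λ^B Λ^{−B} is a real scalar (an element of grade 0); consequently |Λ^B|² := Λ^B Λ^{−B} satisfies |Λ^B|² = |Λ^{−B}|². -/

import Mathlib

/-! Common setup: the real geometric algebra `ℝ_{p,q,r}`, grade projections `⟨·⟩_ℓ`,
the commutator product `×`, the wedge powers `W_j`, the outer exponential and outer
trigonometric functions, the characteristic polynomial data `M_μ`, and the
complexification `ℂ ⊗ ℝ_{p,q,r}`. -/

noncomputable section

open CliffordAlgebra TensorProduct

/-- The diagonal quadratic form of signature `(p,q,r)` on `ℝⁿ`, `n = p+q+r`: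
`p` basis vectors of square `+1`, `q` of square `-1`, `r` of square `0`.
`ℝ_{p,q,r} := CliffordAlgebra (sigQ p q r)`. -/
def sigQ (p q r : ℕ) : QuadraticForm ℝ (Fin (p + q + r) → ℝ) :=
  QuadraticMap.weightedSumSquares ℝ
    (fun i : Fin (p + q + r) => if (i : ℕ) < p then (1 : ℝ) else if (i : ℕ) < p + q then -1 else 0)

variable {K : Type*} [Field K] [CharZero K] {M : Type*} [AddCommGroup M] [Module K M]

/-- The grade-`ℓ` component `⟨x⟩_ℓ` of an element of a Clifford algebra, obtained by
transporting the grading of the exterior algebra along `CliffordAlgebra.equivExterior`. -/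
def gradeProj (Q : QuadraticForm K M) (ℓ : ℕ) (x : CliffordAlgebra Q) : CliffordAlgebra Q :=
  letI : Invertible (2 : K) := invertibleOfNonzero two_ne_zero
  (equivExterior Q).symm
    (DirectSum.decompose (fun n : ℕ => ⋀[K]^n M) (equivExterior Q x) ℓ : ExteriorAlgebra K M)

/-- `x` is homogeneous of grade `ℓ`; in particular `IsGrade Q 2 B` says `B` is a bivector. -/
def IsGrade (Q : QuadraticForm K M) (ℓ : ℕ) (x : CliffordAlgebra Q) : Prop :=
  gradeProj Q ℓ x = x

/-- The commutator product `x × y := (xy - yx)/2`. -/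
def cprod {Q : QuadraticForm K M} (x y : CliffordAlgebra Q) : CliffordAlgebra Q :=
  (2 : K)⁻¹ • (x * y - y * x)

/-- `W_j := (1/j!) ⟨B^j⟩_{2j}`, the normalized `j`-fold wedge power of `B`. -/
def Wj (Q : QuadraticForm K M) (B : CliffordAlgebra Q) (j : ℕ) : CliffordAlgebra Q :=
  ((j.factorial : K)⁻¹) • gradeProj Q (2 * j) (B ^ j)

/-- `B` has effective dimension `2k`: `k` is the largest integer with `W_k ≠ 0`. -/
def HasEffDim (Q : QuadraticForm K M) (B : CliffordAlgebra Q) (k : ℕ) : Prop :=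
  Wj Q B k ≠ 0 ∧ ∀ j, k < j → Wj Q B j = 0

/-- The outer exponential `Λ^B = Σ_{j≥0} W_j`; `n` is any bound beyond which all the `W_j`
vanish (e.g. the dimension of the underlying space), so the sum is complete. -/
def outerExp (Q : QuadraticForm K M) (n : ℕ) (B : CliffordAlgebra Q) : CliffordAlgebra Q :=
  ∑ j ∈ Finset.range (n + 1), Wj Q B j

/-- The outer cosine `co∧(B) := (Λ^B + Λ^{-B})/2`. -/
def coW (Q : QuadraticForm K M) (n : ℕ) (B : CliffordAlgebra Q) : CliffordAlgebra Q :=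
  (2 : K)⁻¹ • (outerExp Q n B + outerExp Q n (-B))

/-- The outer sine `si∧(B) := (Λ^B - Λ^{-B})/2`. -/
def siW (Q : QuadraticForm K M) (n : ℕ) (B : CliffordAlgebra Q) : CliffordAlgebra Q :=
  (2 : K)⁻¹ • (outerExp Q n B - outerExp Q n (-B))

/-- `M_μ := Σ_{j=0}^k (-μ)^{k-j} W_j`; the characteristic polynomial of `B` is
`P_{2k}(μ) = M_μ * reverse M_μ`. -/
def Mpoly (Q : QuadraticForm K M) (B : CliffordAlgebra Q) (k : ℕ) (μ : K) : CliffordAlgebra Q :=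
  ∑ j ∈ Finset.range (k + 1), (-μ) ^ (k - j) • Wj Q B j

/-- The wedge (outer) product, `X ∧ Y := ⟨XY⟩_{i+j}` on homogeneous elements of grades `i`, `j`,
extended bilinearly; `n` bounds the occurring grades. -/
def wedgeProd (Q : QuadraticForm K M) (n : ℕ) (x y : CliffordAlgebra Q) : CliffordAlgebra Q :=
  ∑ i ∈ Finset.range (n + 1), ∑ j ∈ Finset.range (n + 1),
    gradeProj Q (i + j) (gradeProj Q i x * gradeProj Q j y)

/-- The dot product of two vectors, `u · v = ⟨uv⟩₀ = polar(Q)(u,v)/2`, as a scalar. -/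
def vdot (Q : QuadraticForm K M) (u v : M) : K := (2 : K)⁻¹ * QuadraticMap.polar Q u v

/-- The complexified quadratic form of signature `(p,q,r)`. -/
def sigQc (p q r : ℕ) : QuadraticForm ℂ (ℂ ⊗[ℝ] (Fin (p + q + r) → ℝ)) :=
  letI : Invertible (2 : ℝ) := invertibleOfNonzero two_ne_zero
  (sigQ p q r).baseChange ℂ

/-- The canonical embedding of `ℝ_{p,q,r}` into its complexification `ℂ ⊗ ℝ_{p,q,r}`. -/
def toC (p q r : ℕ) (x : CliffordAlgebra (sigQ p q r)) : CliffordAlgebra (sigQc p q r) :=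
  letI : Invertible (2 : ℝ) := invertibleOfNonzero two_ne_zero
  ofBaseChange ℂ (sigQ p q r) ((1 : ℂ) ⊗ₜ x)

/-- `v` is an eigenvector of the bivector `B` with eigenvalue `μ`: `v ≠ 0` and `B × v = μ v`. -/
def IsEigen (Q : QuadraticForm K M) (B : CliffordAlgebra Q) (μ : K) (v : M) : Prop :=
  v ≠ 0 ∧ cprod B (ι Q v) = μ • ι Q v

end

/-!
Put `P_m = ∑_{i+j=m} (-1)^j W_i W_j`, so that `Λ^B Λ^{-B} = ∑_m P_m`. Contraction by a covector `d`
is an antiderivation, hence a derivation on even elements, and `d⌋B` is some vector `u`. As the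
`W_j` are divided powers of `B` in the exterior algebra, `d⌋W_{j+1} = u ∧ W_j = (u W_j + W_j u)/2`.
In `d⌋P_{m+1}` the terms `W_i u W_j` cancel and only `(u P_m - P_m u)/2` survives, which is again
a contraction of the even element `P_m`. By induction on `m` every contraction kills every `P_m`,
and an element killed by all contractions is a scalar, because of Euler's identity
`∑ eᵢ ∧ (eᵢ*⌋x) = n x` in degree `n`.
-/

namespace GeometricAlgebra

open CliffordAlgebra

section Contraction

variable {R : Type*} [CommRing R] {M : Type*} [AddCommGroup M] [Module R M]
variable {Q : QuadraticForm R M} (d : Module.Dual R M)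

theorem involute_contractLeft (x : CliffordAlgebra Q) :
    involute (contractLeft d x) = -contractLeft d (involute x) := by
  induction x using CliffordAlgebra.left_induction with
  | algebraMap r => simp
  | add x y hx hy => simp only [map_add, hx, hy, neg_add]
  | ι_mul x v hx =>
    simp only [contractLeft_ι_mul, map_sub, map_smul, map_mul, map_neg, involute_ι, neg_mul, hx]
    noncomm_ring

theorem contractLeft_mul (x y : CliffordAlgebra Q) :
    contractLeft d (x * y) = contractLeft d x * y + involute x * contractLeft d y := by
  induction x using CliffordAlgebra.left_induction with
  | algebraMap r => simp [contractLeft_algebraMap_mul]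
  | add x z hx hz => simp only [map_add, add_mul, hx, hz]; abel
  | ι_mul x v hx =>
    simp only [mul_assoc, contractLeft_ι_mul, hx, map_mul, involute_ι, sub_mul, mul_add,
      smul_mul_assoc, neg_mul]
    abel

theorem ι_mul_sub_involute_mul_ι (v : M) (x : CliffordAlgebra Q) :
    ι Q v * x - involute x * ι Q v = contractLeft (QuadraticMap.polarBilin Q v) x := by
  induction x using CliffordAlgebra.left_induction with
  | algebraMap r => simp [Algebra.commutes]
  | add x z hx hz => simp only [map_add, add_mul, mul_add, ← hx, ← hz]; abel
  | ι_mul x u hx =>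
    rw [contractLeft_ι_mul, ← hx, map_mul, involute_ι, mul_sub, Algebra.smul_def,
      QuadraticMap.polarBilin_apply_apply, ← ι_mul_ι_add_swap (Q := Q) v u]
    noncomm_ring

theorem contractLeft_pow_succ {x : CliffordAlgebra Q} (hx : involute x = x)
    (hcomm : Commute (contractLeft d x) x) (j : ℕ) :
    contractLeft d (x ^ (j + 1)) = (j + 1 : R) • (contractLeft d x * x ^ j) := by
  induction j with
  | zero => simp
  | succ j ih =>
    rw [pow_succ' x (j + 1), contractLeft_mul, ih, hx, mul_smul_comm, ← mul_assoc, ← hcomm.eq,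
      mul_assoc, ← pow_succ', Nat.cast_succ]
    module

end Contraction

section Exterior

variable {R : Type*} [CommRing R] {M : Type*} [AddCommGroup M] [Module R M]

theorem ι_mem_exteriorPower_one (v : M) : ExteriorAlgebra.ι R v ∈ ⋀[R]^1 M := by
  rw [ExteriorAlgebra.exteriorPower, pow_one]
  exact LinearMap.mem_range_self _ v

theorem involute_of_mem_exteriorPower {n : ℕ} {x : ExteriorAlgebra R M} (hx : x ∈ ⋀[R]^n M) :
    involute (Q := 0) x = (-1 : R) ^ n • x := by
  induction hx using Submodule.pow_induction_on_left' with
  | algebraMap r => simp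
  | add x y i _ _ hx hy => rw [map_add, hx, hy, smul_add]
  | mem_mul v hv i x _ hx =>
    obtain ⟨v, rfl⟩ := hv
    rw [map_mul, hx, involute_ι, pow_succ, mul_smul, mul_smul_comm, neg_mul, neg_one_smul]

theorem contractLeft_mem_exteriorPower (d : Module.Dual R M) {n : ℕ} {x : ExteriorAlgebra R M}
    (hx : x ∈ ⋀[R]^(n + 1) M) : contractLeft (Q := 0) d x ∈ ⋀[R]^n M := by
  induction n generalizing x with
  | zero =>
    rw [ExteriorAlgebra.exteriorPower, zero_add, pow_one] at hx
    obtain ⟨v, rfl⟩ := hx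
    rw [contractLeft_ι, ExteriorAlgebra.exteriorPower, pow_zero]
    exact Submodule.algebraMap_mem (d v)
  | succ n ih =>
    rw [ExteriorAlgebra.exteriorPower, pow_succ'] at hx
    induction hx using Submodule.mul_induction_on' with
    | mem_mul_mem v hv x hx =>
      obtain ⟨v, rfl⟩ := hv
      rw [contractLeft_ι_mul, ExteriorAlgebra.exteriorPower]
      refine sub_mem (Submodule.smul_mem _ _ hx) ?_
      rw [pow_succ']
      exact Submodule.mul_mem_mul (LinearMap.mem_range_self _ v) (ih hx)
    | add x _ y _ hx hy => rw [map_add]; exact add_mem hx hy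

/-- The degree-`n` component of an element of the exterior algebra, as a linear map. -/
abbrev exteriorProj (n : ℕ) : ExteriorAlgebra R M →ₗ[R] ExteriorAlgebra R M :=
  GradedAlgebra.proj (fun i : ℕ => ⋀[R]^i M) n

theorem exteriorProj_of_mem {n : ℕ} {x : ExteriorAlgebra R M} (hx : x ∈ ⋀[R]^n M) :
    exteriorProj n x = x :=
  DirectSum.decompose_of_mem_same (fun i : ℕ => ⋀[R]^i M) hx

theorem exteriorProj_of_mem_ne {m n : ℕ} {x : ExteriorAlgebra R M} (hx : x ∈ ⋀[R]^m M)
    (hmn : m ≠ n) : exteriorProj n x = 0 :=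
  DirectSum.decompose_of_mem_ne (fun i : ℕ => ⋀[R]^i M) hx hmn

theorem exteriorProj_mem (n : ℕ) (x : ExteriorAlgebra R M) : exteriorProj n x ∈ ⋀[R]^n M :=
  SetLike.coe_mem _

theorem exteriorProj_mul_of_mem {i : ℕ} {a : ExteriorAlgebra R M} (ha : a ∈ ⋀[R]^i M) (m : ℕ)
    (x : ExteriorAlgebra R M) : exteriorProj (i + m) (a * x) = a * exteriorProj m x :=
  DirectSum.coe_decompose_mul_add_of_left_mem (fun i : ℕ => ⋀[R]^i M) ha

theorem exteriorProj_contractLeft (d : Module.Dual R M) (n : ℕ) (x : ExteriorAlgebra R M) :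
    exteriorProj n (contractLeft (Q := 0) d x)
      = contractLeft (Q := 0) d (exteriorProj (n + 1) x) := by
  induction x using DirectSum.Decomposition.inductionOn (fun i : ℕ => ⋀[R]^i M) with
  | zero => simp only [map_zero]
  | add x y hx hy => simp only [map_add, hx, hy]
  | @homogeneous i x =>
    obtain ⟨x, hx⟩ := x
    rcases eq_or_ne i (n + 1) with rfl | hi
    · rw [exteriorProj_of_mem hx, exteriorProj_of_mem (contractLeft_mem_exteriorPower d hx)]
    rw [exteriorProj_of_mem_ne hx hi, map_zero]
    rcases i with _ | i
    · rw [ExteriorAlgebra.exteriorPower, pow_zero] at hx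
      obtain ⟨r, rfl⟩ := Submodule.mem_one.1 hx
      rw [contractLeft_algebraMap, map_zero]
    · exact exteriorProj_of_mem_ne (contractLeft_mem_exteriorPower d hx) (by lia)

/-- For infinite `κ` the sum makes sense only over large finite subsets, hence the filter. -/
theorem eventually_sum_ι_mul_contractLeft_eq {κ : Type*} (e : Module.Basis κ R M) {n : ℕ}
    {x : ExteriorAlgebra R M} (hx : x ∈ ⋀[R]^n M) :
    ∀ᶠ s : Finset κ in Filter.atTop,
      ∑ i ∈ s, ExteriorAlgebra.ι R (e i) * contractLeft (Q := 0) (e.coord i) x = (n : R) • x := by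
  induction hx using Submodule.pow_induction_on_left' with
  | algebraMap r => simp [contractLeft_algebraMap]
  | add x y i _ _ hx hy =>
    filter_upwards [hx, hy] with s hsx hsy
    simp only [map_add, mul_add, Finset.sum_add_distrib, hsx, hsy, smul_add]
  | mem_mul v hv k x _ hx =>
    obtain ⟨v, rfl⟩ := hv
    filter_upwards [hx, Filter.eventually_ge_atTop (e.repr v).support] with s hsx hsv
    have hanti (i : κ) : ExteriorAlgebra.ι R (e i) * ExteriorAlgebra.ι R v
        = -(ExteriorAlgebra.ι R v * ExteriorAlgebra.ι R (e i)) :=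
      eq_neg_of_add_eq_zero_left (ExteriorAlgebra.ι_add_mul_swap _ _)
    have hterm (i : κ) : ExteriorAlgebra.ι R (e i) *
          contractLeft (Q := 0) (e.coord i) (ExteriorAlgebra.ι R v * x)
        = ExteriorAlgebra.ι R (e.repr v i • e i) * x + ExteriorAlgebra.ι R v *
          (ExteriorAlgebra.ι R (e i) * contractLeft (Q := 0) (e.coord i) x) := by
      rw [contractLeft_ι_mul, mul_sub, ← mul_assoc, hanti, map_smul, mul_smul_comm,
        smul_mul_assoc, neg_mul, sub_neg_eq_add, mul_assoc, Module.Basis.coord_apply]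
    have hexpand : ∑ i ∈ s, e.repr v i • e i = v := by
      conv_rhs => rw [← e.linearCombination_repr v]
      exact (Finsupp.sum_of_support_subset _ hsv (fun i r => r • e i) fun i _ => zero_smul R _).symm
    rw [Finset.sum_congr rfl fun i _ => hterm i, Finset.sum_add_distrib, ← Finset.sum_mul,
      ← map_sum, hexpand, ← Finset.mul_sum, hsx, mul_smul_comm, Nat.cast_succ, add_smul, one_smul,
      add_comm]

end Exterior

section EquivExterior

variable {R : Type*} [CommRing R] {M : Type*} [AddCommGroup M] [Module R M]

theorem changeForm_involute {Q Q' : QuadraticForm R M} {B : LinearMap.BilinForm R M}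
    (h : B.toQuadraticMap = Q' - Q) (x : CliffordAlgebra Q) :
    changeForm h (involute x) = involute (changeForm h x) := by
  induction x using CliffordAlgebra.left_induction with
  | algebraMap r => simp only [AlgHom.commutes, changeForm_algebraMap]
  | add x y hx hy => simp only [map_add, hx, hy]
  | ι_mul x v hx =>
    simp only [map_mul, involute_ι, neg_mul, map_neg, changeForm_ι_mul, hx, map_sub,
      involute_contractLeft]
    noncomm_ring

variable [Invertible (2 : R)] {Q : QuadraticForm R M}

theorem equivExterior_ι_mul (v : M) (x : CliffordAlgebra Q) :
    equivExterior Q (ι Q v * x) = ExteriorAlgebra.ι R v * equivExterior Q x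
      + contractLeft (Q := 0) (QuadraticMap.associated (R := R) Q v) (equivExterior Q x) := by
  have hneg : QuadraticMap.associated (R := R) (-Q) v = -QuadraticMap.associated (R := R) Q v := by
    rw [map_neg, LinearMap.neg_apply]
  refine (changeForm_ι_mul changeForm.associated_neg_proof v x).trans ?_
  rw [hneg, LinearMap.map_neg₂, sub_neg_eq_add]
  rfl

theorem equivExterior_symm_ι_mul (v : M) (a : ExteriorAlgebra R M) :
    (equivExterior Q).symm (ExteriorAlgebra.ι R v * a) = ι Q v * (equivExterior Q).symm a
      - (equivExterior Q).symm
        (contractLeft (Q := 0) (QuadraticMap.associated (R := R) Q v) a) := by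
  rw [LinearEquiv.symm_apply_eq, map_sub, equivExterior_ι_mul]
  simp only [LinearEquiv.apply_symm_apply, add_sub_cancel_right]

theorem equivExterior_contractLeft (d : Module.Dual R M) (x : CliffordAlgebra Q) :
    equivExterior Q (contractLeft d x) = contractLeft (Q := 0) d (equivExterior Q x) :=
  changeForm_contractLeft changeForm.associated_neg_proof d x

theorem equivExterior_algebraMap (r : R) :
    equivExterior Q (algebraMap R _ r) = algebraMap R _ r :=
  changeForm_algebraMap changeForm.associated_neg_proof r

theorem equivExterior_involute (x : CliffordAlgebra Q) :
    equivExterior Q (involute x) = involute (Q := 0) (equivExterior Q x) :=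
  changeForm_involute changeForm.associated_neg_proof x

theorem equivExterior_ι_mul_add_involute_mul_ι (v : M) (x : CliffordAlgebra Q) :
    equivExterior Q (ι Q v * x + involute x * ι Q v)
      = (2 : R) • (ExteriorAlgebra.ι R v * equivExterior Q x) := by
  have hpolar : QuadraticMap.polarBilin Q v = (2 : R) • QuadraticMap.associated (R := R) Q v := by
    ext w
    simp [QuadraticMap.associated_apply, QuadraticMap.polar]
  have hswap : involute x * ι Q v = ι Q v * x - contractLeft (QuadraticMap.polarBilin Q v) x := by
    rw [← ι_mul_sub_involute_mul_ι, sub_sub_cancel]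
  rw [hswap, map_add, map_sub, equivExterior_contractLeft, equivExterior_ι_mul, hpolar, map_smul,
    LinearMap.smul_apply]
  module

theorem equivExterior_one : equivExterior Q 1 = 1 := by
  rw [← map_one (algebraMap R _), equivExterior_algebraMap, map_one]

theorem exteriorProj_equivExterior_mul {i m : ℕ} {a : ExteriorAlgebra R M} (ha : a ∈ ⋀[R]^i M)
    {x : CliffordAlgebra Q} (hx : ∀ k, m < k → exteriorProj k (equivExterior Q x) = 0) :
    exteriorProj (i + m) (equivExterior Q ((equivExterior Q).symm a * x))
      = a * exteriorProj m (equivExterior Q x) := by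
  induction i using Nat.strong_induction_on generalizing a m with
  | _ i ih =>
    rcases i with _ | i
    · rw [ExteriorAlgebra.exteriorPower, pow_zero] at ha
      obtain ⟨r, rfl⟩ := Submodule.mem_one.1 ha
      rw [← equivExterior_algebraMap, LinearEquiv.symm_apply_apply, equivExterior_algebraMap,
        ← Algebra.smul_def, ← Algebra.smul_def, map_smul, map_smul, zero_add]
    rw [ExteriorAlgebra.exteriorPower, pow_succ'] at ha
    induction ha using Submodule.mul_induction_on' with
    | add a _ b _ ha hb => simp only [map_add, add_mul, ha, hb]
    | mem_mul_mem v hv a ha =>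
      obtain ⟨v, rfl⟩ := hv
      -- The terms correcting `v ∧ ·` are contractions: they reach degree `i + 1 + m` only from the
      -- component of `x` in degree `m + 2`, which vanishes.
      have htop : exteriorProj (i + m) (equivExterior Q ((equivExterior Q).symm a * x))
          = a * exteriorProj m (equivExterior Q x) := ih i i.lt_succ_self ha hx
      have habove : exteriorProj (i + (m + 2)) (equivExterior Q ((equivExterior Q).symm a * x))
          = 0 := by
        rw [ih i i.lt_succ_self ha fun k hk => hx k (by lia), hx _ (by lia), mul_zero]
      have hcontract : exteriorProj (i + 1 + m) (equivExterior Q ((equivExterior Q).symm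
          (contractLeft (Q := 0) (QuadraticMap.associated (R := R) Q v) a) * x)) = 0 := by
        rcases i with _ | i
        · rw [pow_zero] at ha
          obtain ⟨r, rfl⟩ := Submodule.mem_one.1 ha
          rw [contractLeft_algebraMap, map_zero, zero_mul, map_zero, map_zero]
        · rw [show i + 1 + 1 + m = i + (m + 2) by lia,
            ih i (by lia) (contractLeft_mem_exteriorPower _ ha) fun k hk => hx k (by lia),
            hx _ (by lia), mul_zero]
      rw [equivExterior_symm_ι_mul, sub_mul, map_sub, map_sub, hcontract, sub_zero, mul_assoc,
        equivExterior_ι_mul, map_add, exteriorProj_contractLeft,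
        show i + 1 + m + 1 = i + (m + 2) by lia, habove, map_zero, add_zero,
        show i + 1 + m = 1 + (i + m) by lia,
        exteriorProj_mul_of_mem (ι_mem_exteriorPower_one v), htop, mul_assoc]

theorem exteriorProj_equivExterior_pow {i : ℕ} {b : ExteriorAlgebra R M} (hb : b ∈ ⋀[R]^i M)
    (j : ℕ) :
    exteriorProj (i * j) (equivExterior Q ((equivExterior Q).symm b ^ j)) = b ^ j ∧
      ∀ k, i * j < k → exteriorProj k (equivExterior Q ((equivExterior Q).symm b ^ j)) = 0 := by
  induction j with
  | zero =>
    have hone : (1 : ExteriorAlgebra R M) ∈ ⋀[R]^0 M := SetLike.GradedOne.one_mem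
    rw [pow_zero, pow_zero, equivExterior_one]
    exact ⟨exteriorProj_of_mem hone, fun k hk => exteriorProj_of_mem_ne hone (by lia)⟩
  | succ j ih =>
    obtain ⟨htop, habove⟩ := ih
    rw [pow_succ', pow_succ']
    constructor
    · rw [Nat.mul_succ, add_comm, exteriorProj_equivExterior_mul hb habove, htop]
    · intro k hk
      obtain ⟨l, rfl⟩ := Nat.exists_eq_add_of_le (show i ≤ k by lia)
      have hl : i * j < l := by lia
      rw [exteriorProj_equivExterior_mul hb fun k hk => habove k (by lia), habove l hl, mul_zero]

end EquivExterior

section ScalarCriterion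

variable {K : Type*} [Field K] [CharZero K] {M : Type*} [AddCommGroup M] [Module K M]

theorem eq_zero_of_forall_contractLeft_eq_zero {n : ℕ} (hn : n ≠ 0) {x : ExteriorAlgebra K M}
    (hx : x ∈ ⋀[K]^n M) (h : ∀ d, contractLeft (Q := 0) d x = 0) : x = 0 := by
  obtain ⟨s, hs⟩ :=
    (eventually_sum_ι_mul_contractLeft_eq (Module.Basis.ofVectorSpace K M) hx).exists
  simp only [h, mul_zero, Finset.sum_const_zero] at hs
  exact (smul_eq_zero.1 hs.symm).resolve_left (Nat.cast_ne_zero.2 hn)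

theorem mem_exteriorPower_zero_of_forall_contractLeft_eq_zero {x : ExteriorAlgebra K M}
    (h : ∀ d, contractLeft (Q := 0) d x = 0) : x ∈ ⋀[K]^0 M := by
  have hpos {n : ℕ} (hn : n ≠ 0) : exteriorProj n x = 0 := by
    obtain ⟨n, rfl⟩ := Nat.exists_eq_succ_of_ne_zero hn
    refine eq_zero_of_forall_contractLeft_eq_zero hn (exteriorProj_mem _ x) fun d => ?_
    rw [← exteriorProj_contractLeft, h, map_zero]
  classical
  rw [← DirectSum.sum_support_decompose (fun i : ℕ => ⋀[K]^i M) x]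
  refine Submodule.sum_mem _ fun i _ => ?_
  rcases eq_or_ne i 0 with rfl | hi
  · exact exteriorProj_mem 0 x
  · change exteriorProj i x ∈ _
    exact hpos hi ▸ zero_mem _

theorem exists_eq_algebraMap_of_forall_contractLeft_eq_zero {Q : QuadraticForm K M}
    {x : CliffordAlgebra Q} (h : ∀ d, contractLeft d x = 0) :
    ∃ c : K, x = algebraMap K _ c := by
  let : Invertible (2 : K) := invertibleOfNonzero two_ne_zero
  have hmem : equivExterior Q x ∈ ⋀[K]^0 M :=
    mem_exteriorPower_zero_of_forall_contractLeft_eq_zero fun d => by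
      rw [← equivExterior_contractLeft, h, map_zero]
  rw [ExteriorAlgebra.exteriorPower, pow_zero] at hmem
  obtain ⟨c, hc⟩ := Submodule.mem_one.1 hmem
  refine ⟨c, (equivExterior Q).injective ?_⟩
  rw [equivExterior_algebraMap, hc]

end ScalarCriterion

theorem sum_range_mul_sum_range_eq_sum_antidiagonal {A : Type*} [NonUnitalNonAssocSemiring A]
    {f g : ℕ → A} {n : ℕ} (hf : ∀ j, n < j → f j = 0) (hg : ∀ j, n < j → g j = 0) :
    (∑ i ∈ Finset.range (n + 1), f i) * ∑ j ∈ Finset.range (n + 1), g j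
      = ∑ m ∈ Finset.range (2 * n + 1),
        ∑ p ∈ Finset.HasAntidiagonal.antidiagonal m, f p.1 * g p.2 := by
  have hmaps : ∀ p ∈ Finset.range (n + 1) ×ˢ Finset.range (n + 1),
      p.1 + p.2 ∈ Finset.range (2 * n + 1) := fun p hp => by
    simp only [Finset.mem_product, Finset.mem_range] at hp ⊢
    lia
  rw [Finset.sum_mul_sum, ← Finset.sum_product', ← Finset.sum_fiberwise_of_maps_to hmaps]
  refine Finset.sum_congr rfl fun m _ => Finset.sum_subset (fun p hp => ?_) fun p hp hp' => ?_
  · exact Finset.HasAntidiagonal.mem_antidiagonal.2 (Finset.mem_filter.1 hp).2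
  · rw [Finset.HasAntidiagonal.mem_antidiagonal] at hp
    simp only [Finset.mem_filter, Finset.mem_product, Finset.mem_range, hp, and_true] at hp'
    rcases not_and_or.1 hp' with h | h
    · rw [hf _ (by lia), zero_mul]
    · rw [hg _ (by lia), mul_zero]

theorem commute_of_mul_eq_algebraMap {R A : Type*} [CommRing R] [IsDomain R] [Ring A] [Algebra R A]
    [Module.IsTorsionFree R A] {x y : A} {a b : R} (hxy : x * y = algebraMap R A a)
    (hyx : y * x = algebraMap R A b) : Commute x y := by
  have hx : a • x = b • x := by
    rw [Algebra.smul_def, ← hxy, mul_assoc, hyx, ← Algebra.commutes, Algebra.smul_def]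
  rcases eq_or_ne a b with rfl | hab
  · exact hxy.trans hyx.symm
  · have hx0 : x = 0 := by
      rw [← sub_eq_zero, ← sub_smul] at hx
      exact (smul_eq_zero.1 hx).resolve_left (sub_ne_zero.2 hab)
    exact hx0 ▸ Commute.zero_left y

section WedgePower

variable {K : Type*} [Field K] [CharZero K] {M : Type*} [AddCommGroup M] [Module K M]
variable {Q : QuadraticForm K M} {B : CliffordAlgebra Q}

theorem equivExterior_gradeProj [h2 : Invertible (2 : K)] (ℓ : ℕ) (x : CliffordAlgebra Q) :
    equivExterior Q (gradeProj Q ℓ x) = exteriorProj ℓ (equivExterior Q x) := by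
  obtain rfl := Subsingleton.elim h2 (invertibleOfNonzero two_ne_zero)
  exact LinearEquiv.apply_symm_apply _ _

theorem gradeProj_smul (ℓ : ℕ) (c : K) (x : CliffordAlgebra Q) :
    gradeProj Q ℓ (c • x) = c • gradeProj Q ℓ x := by
  let : Invertible (2 : K) := invertibleOfNonzero two_ne_zero
  apply (equivExterior Q).injective
  simp only [equivExterior_gradeProj, map_smul]

theorem Wj_zero : Wj Q B 0 = 1 := by
  let : Invertible (2 : K) := invertibleOfNonzero two_ne_zero
  apply (equivExterior Q).injective
  rw [Wj, Nat.factorial_zero, Nat.cast_one, inv_one, one_smul, pow_zero, equivExterior_gradeProj,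
    equivExterior_one]
  exact exteriorProj_of_mem (SetLike.GradedOne.one_mem (A := fun i : ℕ => ⋀[K]^i M))

theorem equivExterior_mem_of_isGrade [Invertible (2 : K)] {ℓ : ℕ} {x : CliffordAlgebra Q}
    (hx : IsGrade Q ℓ x) : equivExterior Q x ∈ ⋀[K]^ℓ M := by
  rw [← hx, equivExterior_gradeProj]
  exact exteriorProj_mem ℓ _

theorem equivExterior_Wj [Invertible (2 : K)] (hB : IsGrade Q 2 B) (j : ℕ) :
    equivExterior Q (Wj Q B j) = (j.factorial : K)⁻¹ • equivExterior Q B ^ j := by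
  have h := (exteriorProj_equivExterior_pow (Q := Q) (equivExterior_mem_of_isGrade hB) j).1
  rw [LinearEquiv.symm_apply_apply] at h
  rw [Wj, map_smul, equivExterior_gradeProj, h]

theorem Wj_neg (j : ℕ) : Wj Q (-B) j = (-1 : K) ^ j • Wj Q B j := by
  have hpow : (-B) ^ j = (-1 : K) ^ j • B ^ j := by rw [← neg_one_smul K B, smul_pow]
  rw [Wj, hpow, gradeProj_smul, smul_comm, Wj]

theorem Wj_neg_eq_zero {j : ℕ} (hj : Wj Q B j = 0) : Wj Q (-B) j = 0 := by
  rw [Wj_neg, hj, smul_zero]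

theorem isGrade_neg {ℓ : ℕ} {x : CliffordAlgebra Q} (hx : IsGrade Q ℓ x) : IsGrade Q ℓ (-x) := by
  rw [IsGrade, ← neg_one_smul K x, gradeProj_smul, hx]

theorem Wj_eq_zero_of_finrank_lt [FiniteDimensional K M] {j : ℕ}
    (hj : Module.finrank K M < 2 * j) : Wj Q B j = 0 := by
  let : Invertible (2 : K) := invertibleOfNonzero two_ne_zero
  have htrivial : Module.finrank K (⋀[K]^(2 * j) M) = 0 := by
    rw [exteriorPower.finrank_eq, Nat.choose_eq_zero_of_lt hj]
  have hproj : exteriorProj (2 * j) (equivExterior Q (B ^ j)) = 0 :=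
    congr_arg Subtype.val ((Module.finrank_zero_iff.1 htrivial).elim ⟨_, exteriorProj_mem _ _⟩ 0)
  rw [Wj, (LinearEquiv.map_eq_zero_iff _).1 ((equivExterior_gradeProj _ _).trans hproj), smul_zero]

theorem involute_Wj (hB : IsGrade Q 2 B) (j : ℕ) : involute (Wj Q B j) = Wj Q B j := by
  let : Invertible (2 : K) := invertibleOfNonzero two_ne_zero
  apply (equivExterior Q).injective
  rw [equivExterior_involute, equivExterior_Wj hB, map_smul, map_pow,
    involute_of_mem_exteriorPower (equivExterior_mem_of_isGrade hB), neg_one_sq, one_smul]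

theorem exists_contractLeft_Wj_succ (hB : IsGrade Q 2 B) (d : Module.Dual K M) :
    ∃ u : M, ∀ j, contractLeft d (Wj Q B (j + 1))
      = (2 : K)⁻¹ • (ι Q u * Wj Q B j + Wj Q B j * ι Q u) := by
  let : Invertible (2 : K) := invertibleOfNonzero two_ne_zero
  have hb := equivExterior_mem_of_isGrade hB
  have hinv : involute (Q := 0) (equivExterior Q B) = equivExterior Q B := by
    rw [involute_of_mem_exteriorPower hb, neg_one_sq, one_smul]
  have hd := contractLeft_mem_exteriorPower d hb
  rw [ExteriorAlgebra.exteriorPower, pow_one] at hd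
  obtain ⟨u, hu⟩ := hd
  have hcomm : Commute (contractLeft (Q := 0) d (equivExterior Q B)) (equivExterior Q B) := by
    have hpolar : QuadraticMap.polarBilin (0 : QuadraticForm K M) u = 0 := by
      ext
      simp [QuadraticMap.polar]
    have h := ι_mul_sub_involute_mul_ι (Q := 0) u (equivExterior Q B)
    rw [hinv, hpolar, map_zero, LinearMap.zero_apply, sub_eq_zero] at h
    rwa [← hu]
  refine ⟨u, fun j => (equivExterior Q).injective ?_⟩
  have hswap := equivExterior_ι_mul_add_involute_mul_ι u (Wj Q B j)
  rw [involute_Wj hB] at hswap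
  rw [map_smul, hswap, equivExterior_contractLeft, equivExterior_Wj hB, equivExterior_Wj hB,
    map_smul, contractLeft_pow_succ d hinv hcomm, ← hu, inv_smul_smul₀ two_ne_zero,
    mul_smul_comm, smul_smul, Nat.factorial_succ, Nat.cast_mul, mul_inv_rev, Nat.cast_succ,
    inv_mul_cancel_right₀ (Nat.cast_add_one_ne_zero j)]

end WedgePower

section OuterNorm

open Finset.HasAntidiagonal (antidiagonal)

variable {K : Type*} [Field K] [CharZero K] {M : Type*} [AddCommGroup M] [Module K M]
variable {Q : QuadraticForm K M} {B : CliffordAlgebra Q}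

/-- The coefficient `∑_{i + j = m} (-1)^j W_i W_j` of `t^m` in `Λ^{tB} Λ^{-tB}`. -/
def outerNormCoeff (Q : QuadraticForm K M) (B : CliffordAlgebra Q) (m : ℕ) : CliffordAlgebra Q :=
  ∑ p ∈ antidiagonal m, (-1 : K) ^ p.2 • (Wj Q B p.1 * Wj Q B p.2)

theorem involute_outerNormCoeff (hB : IsGrade Q 2 B) (m : ℕ) :
    involute (outerNormCoeff Q B m) = outerNormCoeff Q B m := by
  simp only [outerNormCoeff, map_sum, map_smul, map_mul, involute_Wj hB]

theorem contractLeft_outerNormCoeff_zero (d : Module.Dual K M) :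
    contractLeft d (outerNormCoeff Q B 0) = 0 := by
  simp only [outerNormCoeff, Finset.Nat.antidiagonal_zero, Finset.sum_singleton, Wj_zero, mul_one,
    map_smul, contractLeft_one, smul_zero]

theorem exists_contractLeft_outerNormCoeff_succ (hB : IsGrade Q 2 B) (d : Module.Dual K M) :
    ∃ d' : Module.Dual K M, ∀ m, contractLeft d (outerNormCoeff Q B (m + 1))
      = contractLeft d' (outerNormCoeff Q B m) := by
  obtain ⟨u, hu⟩ := exists_contractLeft_Wj_succ hB d
  refine ⟨(2 : K)⁻¹ • QuadraticMap.polarBilin Q u, fun m => ?_⟩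
  have hleft : ∑ p ∈ antidiagonal (m + 1),
        (-1 : K) ^ p.2 • (contractLeft d (Wj Q B p.1) * Wj Q B p.2)
      = ∑ p ∈ antidiagonal m, (-1 : K) ^ p.2 •
        ((2 : K)⁻¹ • (ι Q u * Wj Q B p.1 + Wj Q B p.1 * ι Q u) * Wj Q B p.2) := by
    rw [Finset.Nat.sum_antidiagonal_succ]
    simp only [Wj_zero, contractLeft_one, zero_mul, smul_zero, zero_add, hu]
  have hright : ∑ p ∈ antidiagonal (m + 1),
        (-1 : K) ^ p.2 • (Wj Q B p.1 * contractLeft d (Wj Q B p.2))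
      = ∑ p ∈ antidiagonal m, (-1 : K) ^ (p.2 + 1) •
        (Wj Q B p.1 * (2 : K)⁻¹ • (ι Q u * Wj Q B p.2 + Wj Q B p.2 * ι Q u)) := by
    rw [Finset.Nat.sum_antidiagonal_succ']
    simp only [Wj_zero, contractLeft_one, mul_zero, smul_zero, zero_add, hu]
  have hcommutator : contractLeft ((2 : K)⁻¹ • QuadraticMap.polarBilin Q u) (outerNormCoeff Q B m)
      = (2 : K)⁻¹ • (ι Q u * outerNormCoeff Q B m - outerNormCoeff Q B m * ι Q u) := by
    rw [map_smul, LinearMap.smul_apply, ← ι_mul_sub_involute_mul_ι, involute_outerNormCoeff hB]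
  rw [hcommutator]
  simp only [outerNormCoeff, map_sum, map_smul, contractLeft_mul, involute_Wj hB, smul_add,
    Finset.sum_add_distrib, hleft, hright]
  rw [← Finset.sum_add_distrib, Finset.mul_sum, Finset.sum_mul, ← Finset.sum_sub_distrib,
    Finset.smul_sum]
  refine Finset.sum_congr rfl fun p _ => ?_
  simp only [mul_smul_comm, smul_mul_assoc, mul_add, add_mul, mul_assoc, pow_succ]
  module

theorem contractLeft_outerNormCoeff (hB : IsGrade Q 2 B) (m : ℕ) (d : Module.Dual K M) :
    contractLeft d (outerNormCoeff Q B m) = 0 := by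
  induction m generalizing d with
  | zero => exact contractLeft_outerNormCoeff_zero d
  | succ m ih =>
    obtain ⟨d', hd'⟩ := exists_contractLeft_outerNormCoeff_succ hB d
    rw [hd', ih]

theorem outerExp_mul_outerExp_neg {n : ℕ} (hn : ∀ j, n < j → Wj Q B j = 0) :
    outerExp Q n B * outerExp Q n (-B) = ∑ m ∈ Finset.range (2 * n + 1), outerNormCoeff Q B m := by
  rw [outerExp, outerExp,
    sum_range_mul_sum_range_eq_sum_antidiagonal hn fun j hj => Wj_neg_eq_zero (hn j hj)]
  simp only [outerNormCoeff, Wj_neg, mul_smul_comm]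

theorem exists_outerExp_mul_outerExp_neg_eq_algebraMap (hB : IsGrade Q 2 B) {n : ℕ}
    (hn : ∀ j, n < j → Wj Q B j = 0) :
    ∃ c : K, outerExp Q n B * outerExp Q n (-B) = algebraMap K _ c := by
  refine exists_eq_algebraMap_of_forall_contractLeft_eq_zero fun d => ?_
  rw [outerExp_mul_outerExp_neg hn, map_sum]
  exact Finset.sum_eq_zero fun m _ => contractLeft_outerNormCoeff hB m d

theorem commute_outerExp_outerExp_neg (hB : IsGrade Q 2 B) {n : ℕ}
    (hn : ∀ j, n < j → Wj Q B j = 0) : Commute (outerExp Q n B) (outerExp Q n (-B)) := by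
  obtain ⟨c, hc⟩ := exists_outerExp_mul_outerExp_neg_eq_algebraMap hB hn
  obtain ⟨c', hc'⟩ := exists_outerExp_mul_outerExp_neg_eq_algebraMap (isGrade_neg hB)
    fun j hj => Wj_neg_eq_zero (hn j hj)
  rw [neg_neg] at hc'
  exact commute_of_mul_eq_algebraMap hc hc'

end OuterNorm

end GeometricAlgebra

theorem outerExp_mul_outerExp_neg_isScalar_general {K : Type*} [Field K] [CharZero K]
    {M : Type*} [AddCommGroup M] [Module K M] (Q : QuadraticForm K M) (n : ℕ)
    (B : CliffordAlgebra Q) (hB : IsGrade Q 2 B) (hn : ∀ j, n < j → Wj Q B j = 0) :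
    (∃ c : K, outerExp Q n B * outerExp Q n (-B) = algebraMap K (CliffordAlgebra Q) c) ∧
      outerExp Q n B * outerExp Q n (-B) = outerExp Q n (-B) * outerExp Q n B :=
  ⟨GeometricAlgebra.exists_outerExp_mul_outerExp_neg_eq_algebraMap hB hn,
    (GeometricAlgebra.commute_outerExp_outerExp_neg hB hn).eq⟩

/-- for any bivector `B`, the product `Λ^B Λ^{-B}` is a real scalar;
consequently `|Λ^B|² := Λ^B Λ^{-B}` satisfies `|Λ^B|² = |Λ^{-B}|²` (i.e. it equals
`Λ^{-B} Λ^{B}`). -/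
theorem outerExp_mul_outerExp_neg_isScalar (p q r : ℕ) (B : CliffordAlgebra (sigQ p q r))
    (hB : IsGrade (sigQ p q r) 2 B) :
    (∃ c : ℝ, outerExp (sigQ p q r) (p + q + r) B * outerExp (sigQ p q r) (p + q + r) (-B)
        = algebraMap ℝ (CliffordAlgebra (sigQ p q r)) c) ∧
    outerExp (sigQ p q r) (p + q + r) B * outerExp (sigQ p q r) (p + q + r) (-B)
      = outerExp (sigQ p q r) (p + q + r) (-B) * outerExp (sigQ p q r) (p + q + r) B := by
  exact outerExp_mul_outerExp_neg_isScalar_general _ _ B hB fun j hj =>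
    GeometricAlgebra.Wj_eq_zero_of_finrank_lt (by rw [Module.finrank_fin_fun]; lia)
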